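/- arXiv:math/0105084 — 3 statements merged into one kernel-verified Lean document; each statement's English description precedes it below -/
import Mathlib

section
/- Let F be a field, a, b ∈ F with a ≠ 0, b ≠ 0 and ab − b + 1 ≠ 0. Let x ∈ F with x ≠ 0, A(x) ≠ 0 and B(x) ≠ 0. Then k is invariant under the involution ρ: k(−A(x)/B(x)) = k(x), where k(x) = B(x)/(a·b·x·A(x)). -/
/-- A(x) = (a·x − a + 1)/a -/
def Af {F : Type*} [Field F] (a x : F) : F := (a * x - a + 1) / a

/-- B(x) = b·x − x + 1 -/
def Bf {F : Type*} [Field F] (b x : F) : F := b * x - x + 1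

/-- μ = −(a·b − b + 1)/a -/
def muf {F : Type*} [Field F] (a b : F) : F := -(a * b - b + 1) / a

/-- k(x) = B(x)/(a·b·x·A(x)) -/
def kf {F : Type*} [Field F] (a b x : F) : F := Bf b x / (a * b * x * Af a x)

/-- ρ(x) = −A(x)/B(x) -/
def rhof {F : Type*} [Field F] (a b x : F) : F := -(Af a x) / Bf b x

/-- σ(x) = −x/B(x) -/
def sigf {F : Type*} [Field F] (b x : F) : F := -x / Bf b x

/-!
Composing with `ρ` gives `A ∘ ρ = μ x / B` and `B ∘ ρ = -μ / B`. So in `k = B / (a b x A)` the map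
`ρ` swaps the factors `x` and `A` of the denominator up to scalars and powers of `B`, and these
combine with the numerator to leave exactly `B`.
-/

section

variable {F : Type*} [Field F] {a b x : F}

theorem muf_ne_zero (ha : a ≠ 0) (hab : a * b - b + 1 ≠ 0) : muf a b ≠ 0 :=
  div_ne_zero (neg_ne_zero.mpr hab) ha

theorem Af_rhof (ha : a ≠ 0) (hBx : Bf b x ≠ 0) :
    Af a (rhof a b x) = muf a b * x / Bf b x := by
  have numerator_eq : (1 - a) * Bf b x - a * Af a x = a * (muf a b * x) := by
    simp only [Af, Bf, muf]
    field_simp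
    ring
  calc Af a (rhof a b x) = ((1 - a) * Bf b x - a * Af a x) / (a * Bf b x) := by
        rw [Af, rhof]
        field_simp
        ring
    _ = muf a b * x / Bf b x := by rw [numerator_eq, mul_div_mul_left _ _ ha]

theorem Bf_rhof (ha : a ≠ 0) (hBx : Bf b x ≠ 0) :
    Bf b (rhof a b x) = -muf a b / Bf b x := by
  have numerator_eq : Bf b x - (b - 1) * Af a x = -muf a b := by
    simp only [Af, Bf, muf]
    field_simp
    ring
  calc Bf b (rhof a b x) = (Bf b x - (b - 1) * Af a x) / Bf b x := by
        rw [Bf, rhof]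
        field_simp
        ring
    _ = -muf a b / Bf b x := by rw [numerator_eq]

end

/-- k is invariant under the involution ρ: k(−A(x)/B(x)) = k(x). -/
theorem stmt_1 {F : Type*} [Field F] (a b : F) (ha : a ≠ 0) (hb : b ≠ 0)
    (hab : a * b - b + 1 ≠ 0) (x : F) (hx : x ≠ 0) (hAx : Af a x ≠ 0) (hBx : Bf b x ≠ 0) :
    kf a b (-(Af a x) / Bf b x) = kf a b x := by
  have hμ : muf a b ≠ 0 := muf_ne_zero ha hab
  calc kf a b (rhof a b x)
      = (-muf a b / Bf b x) / (a * b * (-Af a x / Bf b x) * (muf a b * x / Bf b x)) := by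
        rw [kf, Af_rhof ha hBx, Bf_rhof ha hBx, rhof]
    _ = Bf b x / (a * b * x * Af a x) := by field_simp
    _ = kf a b x := rfl
end

section
/- Let F be a field, a, b, c ∈ F with a ≠ 0 and b ≠ 0, let c ≠ 0, A(c) ≠ 0, B(c) ≠ 0, and let y ∈ F with y ≠ 0, A(y) ≠ 0 and B(y) ≠ 0. Then k(y) = k(c) if and only if y = c or y = −A(c)/B(c); i.e., the only solutions of 1 − k(c)/k(y) = 0 are y₁ = c and y₂ = −(ac − a + 1)/(a(bc − c + 1)). -/
/- The difference of the cross-multiplied sides of `k(y) = k(c)` is antisymmetric in `y` and `c`, so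
`y - c` splits off; the cofactor is linear in `y`, and its root is `ρ(c)`. -/

section

variable {F : Type*} [Field F] {a b c y : F}

theorem Af_eq_add (ha : a ≠ 0) (x : F) : Af a x = x + (1 - a) / a := by
  unfold Af
  field_simp
  ring

theorem Bf_mul_sub_Bf_mul (ha : a ≠ 0) (b c y : F) :
    Bf b c * (y * Af a y) - Bf b y * (c * Af a c) = (y - c) * (y * Bf b c + Af a c) := by
  rw [Af_eq_add ha, Af_eq_add ha]
  unfold Bf
  ring

theorem kf_eq_kf_iff_Bf_mul_eq (ha : a ≠ 0) (hb : b ≠ 0) (hc : c ≠ 0) (hAc : Af a c ≠ 0)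
    (hy : y ≠ 0) (hAy : Af a y ≠ 0) :
    kf a b y = kf a b c ↔ Bf b c * (y * Af a y) = Bf b y * (c * Af a c) := by
  have kf_eq (x : F) : kf a b x = Bf b x / (x * Af a x) / (a * b) := by
    rw [kf, div_div, mul_comm (x * Af a x), mul_assoc (a * b)]
  rw [kf_eq, kf_eq, div_left_inj' (mul_ne_zero ha hb),
    div_eq_div_iff (mul_ne_zero hy hAy) (mul_ne_zero hc hAc), eq_comm]

theorem eq_rhof_iff (hBc : Bf b c ≠ 0) : y = rhof a b c ↔ y * Bf b c + Af a c = 0 := by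
  rw [rhof, eq_div_iff hBc, eq_neg_iff_add_eq_zero]

theorem kf_eq_kf_iff (ha : a ≠ 0) (hb : b ≠ 0) (hc : c ≠ 0) (hAc : Af a c ≠ 0)
    (hBc : Bf b c ≠ 0) (hy : y ≠ 0) (hAy : Af a y ≠ 0) :
    kf a b y = kf a b c ↔ y = c ∨ y = rhof a b c := by
  rw [kf_eq_kf_iff_Bf_mul_eq ha hb hc hAc hy hAy, ← sub_eq_zero, Bf_mul_sub_Bf_mul ha,
    mul_eq_zero, sub_eq_zero, eq_rhof_iff hBc]

theorem rhof_eq_neg_div (a b x : F) :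
    rhof a b x = -(a * x - a + 1) / (a * (b * x - x + 1)) := by
  rw [rhof, Af, Bf, ← neg_div, div_div]

end

/-- k(y) = k(c) iff y = c or y = −A(c)/B(c); i.e., the only solutions
    of 1 − k(c)/k(y) = 0 are y₁ = c and y₂ = −(ac − a + 1)/(a(bc − c + 1)). -/
theorem stmt_11 {F : Type*} [Field F] (a b c : F) (ha : a ≠ 0) (hb : b ≠ 0)
    (hc : c ≠ 0) (hAc : Af a c ≠ 0) (hBc : Bf b c ≠ 0) (y : F)
    (hy : y ≠ 0) (hAy : Af a y ≠ 0) (hBy : Bf b y ≠ 0) :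
    kf a b y = kf a b c ↔ y = c ∨ y = -(a * c - a + 1) / (a * (b * c - c + 1)) := by
  rw [← rhof_eq_neg_div]
  exact kf_eq_kf_iff ha hb hc hAc hBc hy hAy
end

section
/- Let F be a field, a, b, c ∈ F with a ≠ 0, c ≠ 0, A(c) ≠ 0 and B(c) ≠ 0, and let y ∈ F with B(y) ≠ 0. Set y₂ = ρ(c) = −A(c)/B(c), l₁(y) = 1 − y/c and l₂(y) = (y₂ − y)/(y₂·B(y)). Then l₁ transforms under the involution ρ into ε₂·l₂, where ε₂ = (ca − a + 1)/(ca); that is, l₁(ρ(y)) = ((ca − a + 1)/(ca))·l₂(y). -/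
section LinearFractional

variable {F : Type*} [Field F] {a b x y : F}

theorem Af_div_self (a x : F) : Af a x / x = (x * a - a + 1) / (x * a) := by
  rw [Af, div_div, mul_comm a x]

-- Both sides are the symmetric polynomial `(b - 1) * x * y + x + y + (1 - a) / a`.
theorem mul_Bf_add_Af_comm (ha : a ≠ 0) (b x y : F) :
    x * Bf b y + Af a y = y * Bf b x + Af a x := by
  unfold Af Bf
  field_simp
  ring

theorem rhof_mul_Bf (a : F) (hx : Bf b x ≠ 0) : rhof a b x * Bf b x = -Af a x :=
  div_mul_cancel₀ _ hx

theorem rhof_ne_zero (hA : Af a x ≠ 0) (hB : Bf b x ≠ 0) : rhof a b x ≠ 0 :=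
  div_ne_zero (neg_ne_zero.mpr hA) hB

theorem sub_rhof_mul_Bf_comm (ha : a ≠ 0) (hx : Bf b x ≠ 0) (hy : Bf b y ≠ 0) :
    (x - rhof a b y) * Bf b y = (y - rhof a b x) * Bf b x := by
  simpa only [sub_mul, rhof_mul_Bf a hx, rhof_mul_Bf a hy, sub_neg_eq_add] using
    mul_Bf_add_Af_comm ha b x y

end LinearFractional

/-- with y₂ = ρ(c) = −A(c)/B(c), l₁(y) = 1 − y/c and
    l₂(y) = (y₂ − y)/(y₂·B(y)), one has l₁(ρ(y)) = ((ca − a + 1)/(ca))·l₂(y). -/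
theorem stmt_19 {F : Type*} [Field F] (a b c : F) (ha : a ≠ 0) (hc : c ≠ 0)
    (hAc : Af a c ≠ 0) (hBc : Bf b c ≠ 0) (y : F) (hBy : Bf b y ≠ 0) :
    1 - rhof a b y / c =
      ((c * a - a + 1) / (c * a)) *
        ((-(Af a c) / Bf b c - y) / (-(Af a c) / Bf b c * Bf b y)) := by
  have Af_eq : Af a c = -(rhof a b c * Bf b c) := by rw [rhof_mul_Bf a hBc, neg_neg]
  have rhof_c_ne_zero : rhof a b c ≠ 0 := rhof_ne_zero hAc hBc
  calc 1 - rhof a b y / c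
      = (c - rhof a b y) / c := one_sub_div hc
    _ = (y - rhof a b c) * Bf b c / (c * Bf b y) := by
        rw [← sub_rhof_mul_Bf_comm ha hBc hBy, mul_div_mul_right _ _ hBy]
    _ = Af a c / c * ((rhof a b c - y) / (rhof a b c * Bf b y)) := by
        rw [Af_eq]
        field_simp
        ring
    _ = (c * a - a + 1) / (c * a) * ((rhof a b c - y) / (rhof a b c * Bf b y)) := by
        rw [Af_div_self]
end
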